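/- Pfaffian Plücker relations: Let (X_i, X_j) denote entries of a skew-symmetric array on a set of symbols, and (X_{k_1},...,X_{k_{2m}}) denote the Pfaffian of the corresponding submatrix. Then for odd integers R and S, Σ_{r=1}^{R} (-1)^r (X_{i_1},...,X_{i_S}, X_{j_r})(X_{j_1},...,X̂_{j_r},...,X_{j_R}) + Σ_{s=1}^{S} (-1)^s (X_{i_1},...,X̂_{i_s},...,X_{i_S})(X_{j_1},...,X_{j_R}, X_{i_s}) = 0, where hats denote omission. -/

import Mathlib

/-- The Pfaffian `(X_{k_1},…,X_{k_{2m}})` of the skew-symmetric array of pairings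
`a (X_i) (X_j)`, on a list of symbols, defined through the expansion along the
first entry.  For odd-length lists the value is `0`, and for the empty list `1`. -/
noncomputable def pfL {R : Type*} [CommRing R] {α : Type*} (a : α → α → R) : List α → R
  | [] => 1
  | x :: xs => ∑ j : Fin xs.length,
      (-1 : R) ^ (j : ℕ) * a x (xs.get j) * pfL a (xs.eraseIdx j)
termination_by l => l.length
decreasing_by
  simp only [List.length_cons]
  have h1 : (xs.eraseIdx j).length ≤ xs.length := List.length_eraseIdx_le ..
  omega

/-!
Expanding a Pfaffian along its first entry and then along its last, or in the opposite order, gives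
the same terms, so by induction it can be expanded along the last entry. Applied to
`(X_{i_1},…,X_{i_S},X_{j_r})` and `(X_{j_1},…,X_{j_R},X_{i_s})`, this turns both sums of the
relation into double sums over `(r, s)`, whose terms differ only in the factor `(X_{i_s}, X_{j_r})`
or `(X_{j_r}, X_{i_s})` and so cancel by skew-symmetry.
-/

section AlternatingSum

variable {α M N : Type*} [AddCommGroup M] [AddCommGroup N]

/-- The alternating sum `∑ⱼ (-1)ʲ g(tⱼ, t̂ⱼ)` over the ways of singling out one entry `tⱼ` of a
list `t`, where `t̂ⱼ` is `t` with that entry omitted. It is the shape common to the expansions of a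
Pfaffian and to the Plücker relations. Positions are counted from `0`. -/
def altSum (g : α → List α → M) (t : List α) : M :=
  ∑ j : Fin t.length, (-1 : ℤ) ^ (j : ℕ) • g (t.get j) (t.eraseIdx j)

@[simp]
theorem altSum_nil (g : α → List α → M) : altSum g [] = 0 := by
  simp [altSum]

theorem altSum_cons (g : α → List α → M) (u : α) (t : List α) :
    altSum g (u :: t) = g u t - altSum (fun v l => g v (u :: l)) t := by
  unfold altSum
  refine (Fin.sum_univ_succ (n := t.length) _).trans ?_
  simp [pow_succ, sub_eq_add_neg]

theorem altSum_append_singleton (g : α → List α → M) (t : List α) (y : α) :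
    altSum g (t ++ [y]) =
      altSum (fun v l => g v (l ++ [y])) t + (-1 : ℤ) ^ t.length • g y t := by
  induction t generalizing g with
  | nil => simp [altSum_cons]
  | cons u t ih =>
    simp only [List.cons_append, altSum_cons, ih, List.length_cons, pow_succ, mul_neg_one,
      neg_smul]
    abel

theorem altSum_congr {g h : α → List α → M} {t : List α}
    (hgh : ∀ v l, l.length + 1 = t.length → g v l = h v l) : altSum g t = altSum h t := by
  refine Finset.sum_congr rfl fun j _ => ?_
  rw [hgh _ _ (List.length_eraseIdx_add_one j.isLt)]

theorem map_altSum (f : M →+ N) (g : α → List α → M) (t : List α) :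
    f (altSum g t) = altSum (fun v l => f (g v l)) t := by
  simp only [altSum, map_sum, map_zsmul]

theorem altSum_neg (g : α → List α → M) (t : List α) :
    altSum (fun v l => -g v l) t = -altSum g t :=
  (map_altSum negAddMonoidHom g t).symm

theorem altSum_sub (g h : α → List α → M) (t : List α) :
    altSum (fun v l => g v l - h v l) t = altSum g t - altSum h t := by
  simp only [altSum, smul_sub, Finset.sum_sub_distrib]

theorem altSum_comm {β : Type*} (F : α → List α → β → List β → M) (s : List α) (t : List β) :
    altSum (fun v l => altSum (F v l) t) s =
      altSum (fun w m => altSum (fun v l => F v l w m) s) t := by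
  simp only [altSum, Finset.smul_sum]
  rw [Finset.sum_comm]
  exact Finset.sum_congr rfl fun _ _ => Finset.sum_congr rfl fun _ _ => smul_comm _ _ _

-- Omitting `v` and then `w` or `w` and then `v` leaves the same list, but with opposite signs.
theorem altSum_altSum_swap (F : α → α → List α → M) (t : List α) :
    altSum (fun v l => altSum (F v) l) t = -altSum (fun v l => altSum (fun w => F w v) l) t := by
  induction t generalizing F with
  | nil => simp
  | cons u t ih =>
    simp only [altSum_cons, altSum_sub]
    rw [ih fun v w m => F v w (u :: m)]
    abel

end AlternatingSum

section Ring

variable {α A : Type*}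

theorem mul_altSum [NonUnitalNonAssocRing A] (c : A) (g : α → List α → A) (t : List α) :
    c * altSum g t = altSum (fun v l => c * g v l) t :=
  map_altSum (AddMonoidHom.mulLeft c) g t

theorem altSum_mul [NonUnitalNonAssocRing A] (c : A) (g : α → List α → A) (t : List α) :
    altSum g t * c = altSum (fun v l => g v l * c) t :=
  map_altSum (AddMonoidHom.mulRight c) g t

theorem sum_neg_one_pow_succ_mul_eq_neg_altSum [Ring A] (g : α → List α → A) (t : List α) :
    ∑ j : Fin t.length, (-1 : A) ^ ((j : ℕ) + 1) * g (t.get j) (t.eraseIdx j) = -altSum g t := by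
  simp [altSum, pow_succ]

end Ring

section Pfaffian

variable {α R : Type*} [CommRing R] (a : α → α → R)

theorem pfL_cons (x : α) (t : List α) :
    pfL a (x :: t) = altSum (fun v l => a x v * pfL a l) t := by
  simp [pfL, altSum, mul_assoc]

theorem pfL_append_singleton {t : List α} (ht : Odd t.length) (y : α) :
    pfL a (t ++ [y]) = altSum (fun v l => a v y * pfL a l) t := by
  induction hn : t.length using Nat.strong_induction_on generalizing t with
  | _ n ih =>
  obtain _ | ⟨x, t⟩ := t
  · simp at ht
  have ht' : Even t.length := by simpa [Nat.odd_add_one] using ht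
  have expand_last_inside : altSum (fun v l => a x v * pfL a (l ++ [y])) t =
      altSum (fun v l => altSum (fun w m => a x v * (a w y * pfL a m)) l) t :=
    altSum_congr fun v l hl => by
      have hl_odd : Odd l.length := by grind
      rw [ih l.length (by grind) hl_odd rfl, mul_altSum]
  have expand_first_inside : altSum (fun v l => a v y * pfL a (x :: l)) t =
      altSum (fun v l => altSum (fun w m => a x w * (a v y * pfL a m)) l) t := by
    simp only [pfL_cons, mul_altSum, mul_left_comm]
  calc pfL a (x :: t ++ [y])
      = altSum (fun v l => a x v * pfL a (l ++ [y])) t + a x y * pfL a t := by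
        rw [List.cons_append, pfL_cons, altSum_append_singleton, ht'.neg_one_pow, one_smul]
    _ = a x y * pfL a t - altSum (fun v l => a v y * pfL a (x :: l)) t := by
        rw [expand_last_inside, expand_first_inside, altSum_altSum_swap]
        abel
    _ = altSum (fun v l => a v y * pfL a l) (x :: t) :=
        (altSum_cons (fun v l => a v y * pfL a l) x t).symm

theorem altSum_pfL_append_singleton_mul_eq_neg (hskew : ∀ x y, a x y = -a y x) {xs ys : List α}
    (hS : Odd xs.length) (hR : Odd ys.length) :
    altSum (fun y l => pfL a (xs ++ [y]) * pfL a l) ys =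
      -altSum (fun x k => pfL a (ys ++ [x]) * pfL a k) xs := by
  calc altSum (fun y l => pfL a (xs ++ [y]) * pfL a l) ys
      = altSum (fun y l => altSum (fun x k => a x y * (pfL a k * pfL a l)) xs) ys := by
        simp only [pfL_append_singleton a hS, altSum_mul, mul_assoc]
    _ = altSum (fun x k => altSum (fun y l => a x y * (pfL a k * pfL a l)) ys) xs :=
        altSum_comm _ ys xs
    _ = -altSum (fun x k => altSum (fun y l => a y x * (pfL a l * pfL a k)) ys) xs := by
        simp only [← altSum_neg]
        exact altSum_congr fun x k _ => altSum_congr fun y l _ => by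
          rw [hskew x y, neg_mul, mul_comm (pfL a k)]
    _ = -altSum (fun x k => pfL a (ys ++ [x]) * pfL a k) xs := by
        simp only [pfL_append_singleton a hR, altSum_mul, mul_assoc]

end Pfaffian

/-- Pfaffian analogue of the Plücker relations: for lists `xs = (X_{i_1},…,X_{i_S})`
and `ys = (X_{j_1},…,X_{j_R})` of odd lengths `S`, `R`,
`Σ_{r=1}^{R} (-1)^r (X_{i_1},…,X_{i_S},X_{j_r})(X_{j_1},…,X̂_{j_r},…,X_{j_R})
 + Σ_{s=1}^{S} (-1)^s (X_{i_1},…,X̂_{i_s},…,X_{i_S})(X_{j_1},…,X_{j_R},X_{i_s}) = 0`. -/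
theorem stmt3 {R : Type*} [CommRing R] {α : Type*} (a : α → α → R)
    (hskew : ∀ x y, a x y = - a y x) (xs ys : List α)
    (hS : Odd xs.length) (hR : Odd ys.length) :
    (∑ r : Fin ys.length,
        (-1 : R) ^ ((r : ℕ) + 1) * pfL a (xs ++ [ys.get r]) * pfL a (ys.eraseIdx r))
    + (∑ s : Fin xs.length,
        (-1 : R) ^ ((s : ℕ) + 1) * pfL a (xs.eraseIdx s) * pfL a (ys ++ [xs.get s])) = 0 := by
  have hxs := sum_neg_one_pow_succ_mul_eq_neg_altSum (fun x k => pfL a (ys ++ [x]) * pfL a k) xs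
  have hys := sum_neg_one_pow_succ_mul_eq_neg_altSum (fun y l => pfL a (xs ++ [y]) * pfL a l) ys
  simp only [mul_assoc, mul_comm (pfL a (xs.eraseIdx _))]
  rw [hxs, hys, altSum_pfL_append_singleton_mul_eq_neg a hskew hS hR, neg_neg, add_neg_cancel]
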